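/- Let X ~ Binomial(N, p) with N ≥ 2 and let k be an integer with 1 ≤ k < Np. Then log(Np) − E[log(X) | X ≥ k] ≤ (3/(2Np)) / (1 − exp(−2(Np − k)²/N)). -/

import Mathlib

open Finset

/-- The probability that a binomial random variable with parameters `N` and `p` equals `j`. -/
noncomputable def binomialWeight (N : ℕ) (p : ℝ) (j : ℕ) : ℝ :=
  (N.choose j : ℝ) * p ^ j * (1 - p) ^ (N - j)

lemma binomialWeight_nonneg {p : ℝ} (hp0 : 0 ≤ p) (hp1 : p ≤ 1) (N j : ℕ) :
    0 ≤ binomialWeight N p j := by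
  have : 0 ≤ 1 - p := by linarith
  unfold binomialWeight
  positivity

lemma sum_binomialWeight_mul_pow (N : ℕ) (p t : ℝ) :
    ∑ j ∈ range (N + 1), binomialWeight N p j * t ^ j = (1 - p + p * t) ^ N := by
  rw [add_comm (1 - p), add_pow]
  refine sum_congr rfl fun j _ => ?_
  rw [binomialWeight, mul_pow]
  ring

lemma sum_binomialWeight (N : ℕ) (p : ℝ) :
    ∑ j ∈ range (N + 1), binomialWeight N p j = 1 := by
  simpa using sum_binomialWeight_mul_pow N p 1

lemma eval_bernsteinPolynomial (N : ℕ) (p : ℝ) (j : ℕ) :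
    (bernsteinPolynomial ℝ N j).eval p = binomialWeight N p j := by
  simp [bernsteinPolynomial, binomialWeight]

lemma sum_binomialWeight_mul_id (N : ℕ) (p : ℝ) :
    ∑ j ∈ range (N + 1), binomialWeight N p j * j = N * p := by
  have h := congrArg (Polynomial.eval p) (bernsteinPolynomial.sum_smul ℝ N)
  simp only [Polynomial.eval_finsetSum, eval_bernsteinPolynomial, Polynomial.eval_X,
    nsmul_eq_mul, Polynomial.eval_mul, Polynomial.eval_natCast] at h
  rw [← h]
  exact sum_congr rfl fun j _ => mul_comm _ _

lemma sum_binomialWeight_mul_sq_sub_mean (N : ℕ) (p : ℝ) :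
    ∑ j ∈ range (N + 1), binomialWeight N p j * ((j : ℝ) - N * p) ^ 2 = N * p * (1 - p) := by
  have h := congrArg (Polynomial.eval p) (bernsteinPolynomial.variance ℝ N)
  simp only [Polynomial.eval_finsetSum, eval_bernsteinPolynomial,
    Polynomial.eval_X, nsmul_eq_mul, Polynomial.eval_mul, Polynomial.eval_pow,
    Polynomial.eval_sub, Polynomial.eval_natCast, Polynomial.eval_one] at h
  rw [← h]
  exact sum_congr rfl fun j _ => by ring

lemma sum_binomialWeight_div_add_one_le {p : ℝ} (hp0 : 0 < p) (hp1 : p ≤ 1) (N : ℕ) :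
    ∑ j ∈ range (N + 1), binomialWeight N p j / (j + 1) ≤ 1 / ((N + 1) * p) := by
  have h := sum_binomialWeight (N + 1) p
  rw [sum_range_succ'] at h
  have h0 := binomialWeight_nonneg hp0.le hp1 (N + 1) 0
  rw [le_div_iff₀ (by positivity), sum_mul]
  refine le_trans (le_of_eq (sum_congr rfl fun j _ => ?_))
    (show ∑ j ∈ range (N + 1), binomialWeight (N + 1) p (j + 1) ≤ 1 by linarith)
  have hc : ((N : ℝ) + 1) * N.choose j = (N + 1).choose (j + 1) * (j + 1) := by
    exact_mod_cast Nat.add_one_mul_choose_eq N j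
  have hj : (j : ℝ) + 1 ≠ 0 := by positivity
  rw [binomialWeight, binomialWeight, div_mul_eq_mul_div, div_eq_iff hj,
    Nat.add_sub_add_right, pow_succ]
  linear_combination (p ^ j * (1 - p) ^ (N - j) * p) * hc

/-- Hoeffding's lemma for a Bernoulli random variable. -/
lemma one_sub_add_mul_exp_le {p : ℝ} (hp0 : 0 ≤ p) (hp1 : p ≤ 1) (t : ℝ) :
    1 - p + p * Real.exp t ≤ Real.exp (p * t + t ^ 2 / 8) := by
  let ν : MeasureTheory.Measure ℝ :=
    ENNReal.ofReal (1 - p) • MeasureTheory.Measure.dirac 0 +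
      ENNReal.ofReal p • MeasureTheory.Measure.dirac 1
  have hq : 0 ≤ 1 - p := by linarith
  have : MeasureTheory.IsProbabilityMeasure ν := by
    constructor
    simp [ν, ← ENNReal.ofReal_add hq hp0]
  have hint (f : ℝ → ℝ) : ∫ x, f x ∂ν = (1 - p) * f 0 + p * f 1 := by
    rw [MeasureTheory.integral_add_measure]
    · simp [ENNReal.toReal_ofReal, hq, hp0]
    all_goals
      exact (MeasureTheory.integrable_dirac (by simp)).smul_measure ENNReal.ofReal_ne_top
  have hmem : ∀ᵐ x ∂ν, x ∈ Set.Icc (0 : ℝ) 1 := by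
    rw [MeasureTheory.ae_add_measure_iff]
    constructor <;> refine MeasureTheory.Measure.ae_smul_measure ?_ _ <;>
      simp [MeasureTheory.ae_dirac_eq]
  have h := (ProbabilityTheory.hasSubgaussianMGF_of_mem_Icc
    (X := fun x : ℝ => x) aemeasurable_id hmem).mgf_le t
  rw [ProbabilityTheory.mgf, hint, hint] at h
  have e1 : Real.exp (t * (0 - ((1 - p) * 0 + p * 1))) = Real.exp (-(p * t)) := by
    congr 1; ring
  have e2 : Real.exp (t * (1 - ((1 - p) * 0 + p * 1))) = Real.exp (-(p * t)) * Real.exp t := by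
    rw [← Real.exp_add]; congr 1; ring
  rw [e1, e2] at h
  have h' := mul_le_mul_of_nonneg_left h (Real.exp_pos (p * t)).le
  have e3 : Real.exp (p * t) * Real.exp (-(p * t)) = 1 := by
    rw [← Real.exp_add]; simp
  calc 1 - p + p * Real.exp t
      = Real.exp (p * t) * ((1 - p) * Real.exp (-(p * t)) +
          p * (Real.exp (-(p * t)) * Real.exp t)) := by
        linear_combination (-(1 - p + p * Real.exp t)) * e3
    _ ≤ _ := h'
    _ = _ := by
        rw [← Real.exp_add]
        congr 1
        simp
        ring

/-- Hoeffding's inequality for the lower tail of a binomial random variable. -/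
lemma one_sub_exp_le_sum_Icc_binomialWeight {N k : ℕ} {p : ℝ} (hN : 0 < N) (hp0 : 0 ≤ p)
    (hp1 : p ≤ 1) (hkN : k ≤ N) (hk : (k : ℝ) ≤ N * p) :
    1 - Real.exp (-2 * ((N : ℝ) * p - k) ^ 2 / N) ≤ ∑ j ∈ Icc k N, binomialWeight N p j := by
  have hNR : (0 : ℝ) < N := by exact_mod_cast hN
  set s : ℝ := 4 * (N * p - k) / N with hs
  have hs0 : 0 ≤ s := div_nonneg (by linarith) hNR.le
  have hsplit : ∑ j ∈ range k, binomialWeight N p j + ∑ j ∈ Icc k N, binomialWeight N p j = 1 := by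
    rw [← sum_binomialWeight N p, ← Ico_add_one_right_eq_Icc]
    exact sum_range_add_sum_Ico _ (by omega)
  have htail : ∑ j ∈ range k, binomialWeight N p j ≤
      Real.exp (s * k) * (1 - p + p * Real.exp (-s)) ^ N := by
    rw [← sum_binomialWeight_mul_pow, mul_sum]
    calc ∑ j ∈ range k, binomialWeight N p j
        ≤ ∑ j ∈ range k, Real.exp (s * k) * (binomialWeight N p j * Real.exp (-s) ^ j) := by
          refine sum_le_sum fun j hj => ?_
          have hjk : (j : ℝ) ≤ k := by exact_mod_cast (mem_range.mp hj).le
          have : 1 ≤ Real.exp (s * k) * Real.exp (-s) ^ j := by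
            rw [← Real.exp_nat_mul, ← Real.exp_add, Real.one_le_exp_iff]
            nlinarith
          nlinarith [binomialWeight_nonneg hp0 hp1 N j]
      _ ≤ _ := by
          refine sum_le_sum_of_subset_of_nonneg (range_subset_range.mpr (by omega)) fun j _ _ => ?_
          have := binomialWeight_nonneg hp0 hp1 N j
          positivity
  have hbase : (1 - p + p * Real.exp (-s)) ^ N ≤ Real.exp (N * (p * -s + (-s) ^ 2 / 8)) := by
    rw [Real.exp_nat_mul]
    refine pow_le_pow_left₀ ?_ (one_sub_add_mul_exp_le hp0 hp1 (-s)) N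
    have := Real.exp_pos (-s)
    nlinarith [mul_nonneg hp0 this.le]
  have hexp : Real.exp (s * k) * Real.exp (N * (p * -s + (-s) ^ 2 / 8)) =
      Real.exp (-2 * ((N : ℝ) * p - k) ^ 2 / N) := by
    rw [← Real.exp_add]
    congr 1
    rw [hs]
    field_simp
    ring
  have := mul_le_mul_of_nonneg_left hbase (Real.exp_pos (s * k)).le
  linarith

lemma neg_log_le_of_pos {x : ℝ} (hx : 0 < x) :
    -Real.log x ≤ (1 - x) + (x - 1) ^ 2 / 6 + (x - 1) ^ 2 / (3 * x) := by
  let f : ℝ → ℝ := fun y => Real.log y + 1 / 2 - y + y ^ 2 / 6 + y⁻¹ / 3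
  have hderiv {y : ℝ} (hy : 0 < y) : HasDerivAt f ((y - 1) ^ 3 / (3 * y ^ 2)) y := by
    have h := ((((Real.hasDerivAt_log hy.ne').add_const (1 / 2)).sub (hasDerivAt_id y)).add
      ((hasDerivAt_pow 2 y).div_const 6)).add ((hasDerivAt_inv hy.ne').div_const 3)
    refine h.congr_deriv ?_
    field_simp
    ring
  have hf1 : f 1 = 0 := by norm_num [f]
  have hfx : 0 ≤ f x := by
    rw [← hf1]
    rcases le_total x 1 with h | h
    · refine antitoneOn_of_deriv_nonpos (convex_Icc x 1)
        (fun y hy => (hderiv (hx.trans_le hy.1)).continuousAt.continuousWithinAt)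
        (fun y hy => ?_) (fun y hy => ?_) ⟨le_rfl, h⟩ ⟨h, le_rfl⟩ h <;>
        rw [interior_Icc] at hy <;> have hy0 := hx.trans hy.1
      · exact (hderiv hy0).differentiableAt.differentiableWithinAt
      · rw [(hderiv hy0).deriv]
        exact div_nonpos_of_nonpos_of_nonneg
          ((Odd.pow_nonpos (by decide) (by linarith [hy.2]))) (by positivity)
    · refine monotoneOn_of_deriv_nonneg (convex_Icc 1 x)
        (fun y hy => (hderiv (one_pos.trans_le hy.1)).continuousAt.continuousWithinAt)
        (fun y hy => ?_) (fun y hy => ?_) ⟨le_rfl, h⟩ ⟨h, le_rfl⟩ h <;>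
        rw [interior_Icc] at hy <;> have hy0 := one_pos.trans hy.1
      · exact (hderiv hy0).differentiableAt.differentiableWithinAt
      · rw [(hderiv hy0).deriv]
        have : 0 ≤ y - 1 := by linarith [hy.1]
        positivity
  have : (1 - x) + (x - 1) ^ 2 / 6 + (x - 1) ^ 2 / (3 * x) = f x - Real.log x := by
    simp only [f]
    field_simp
    ring
  linarith

lemma log_sub_log_le_of_one_le {m y : ℝ} (hm : 0 < m) (hy : 1 ≤ y) :
    Real.log m - Real.log y ≤
      (1 - y / m) + ((y - m) ^ 2 / (6 * m ^ 2) + 2 * (y - m) ^ 2 / (3 * m * (y + 1))) := by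
  have hy0 : 0 < y := by linarith
  have h := neg_log_le_of_pos (div_pos hy0 hm)
  rw [Real.log_div hy0.ne' hm.ne'] at h
  have e1 : (y / m - 1) ^ 2 / 6 = (y - m) ^ 2 / (6 * m ^ 2) := by
    field_simp
  have e2 : (y / m - 1) ^ 2 / (3 * (y / m)) = (y - m) ^ 2 / (3 * m * y) := by
    field_simp
  have e3 : (y - m) ^ 2 / (3 * m * y) ≤ 2 * (y - m) ^ 2 / (3 * m * (y + 1)) := by
    rw [div_le_div_iff₀ (by positivity) (by positivity)]
    have : 0 ≤ (y - m) ^ 2 * (3 * m) * (y - 1) :=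
      mul_nonneg (by positivity) (by linarith)
    nlinarith
  linarith

lemma sum_binomialWeight_mul_sq_sub_mean_div_le {N : ℕ} {p : ℝ} (hN : 0 < N) (hp0 : 0 < p)
    (hp1 : p ≤ 1) :
    ∑ j ∈ range (N + 1), binomialWeight N p j * (((j : ℝ) - N * p) ^ 2 / (j + 1)) ≤
      1 + 1 / (N * p) := by
  have hNR : (0 : ℝ) < N := by exact_mod_cast hN
  have hm : 0 < (N : ℝ) * p := by positivity
  have hinv : ∑ j ∈ range (N + 1), binomialWeight N p j / (j + 1) ≤ 1 / (N * p) :=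
    (sum_binomialWeight_div_add_one_le hp0 hp1 N).trans
      (one_div_le_one_div_of_le hm (by nlinarith))
  have heq : ∑ j ∈ range (N + 1), binomialWeight N p j * (((j : ℝ) - N * p) ^ 2 / (j + 1)) =
      ∑ j ∈ range (N + 1), binomialWeight N p j * j
        - (2 * (N * p) + 1) * ∑ j ∈ range (N + 1), binomialWeight N p j
        + (N * p + 1) ^ 2 * ∑ j ∈ range (N + 1), binomialWeight N p j / (j + 1) := by
    rw [mul_sum, mul_sum, ← sum_sub_distrib, ← sum_add_distrib]
    refine sum_congr rfl fun j _ => ?_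
    have hj : (j : ℝ) + 1 ≠ 0 := by positivity
    field_simp
    ring
  rw [heq, sum_binomialWeight_mul_id, sum_binomialWeight]
  have h := mul_le_mul_of_nonneg_left hinv (sq_nonneg ((N : ℝ) * p + 1))
  have e : ((N : ℝ) * p + 1) ^ 2 * (1 / (N * p)) = N * p + 2 + 1 / (N * p) := by
    field_simp
    ring
  linarith

lemma sum_Icc_binomialWeight_mul_one_sub_div_mean_nonpos {N k : ℕ} {p : ℝ} (hp0 : 0 ≤ p)
    (hp1 : p ≤ 1) (hkN : k ≤ N) (hm : 0 < (N : ℝ) * p) (hk : (k : ℝ) ≤ N * p) :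
    ∑ j ∈ Icc k N, binomialWeight N p j * (1 - (j : ℝ) / (N * p)) ≤ 0 := by
  have hsplit : ∑ j ∈ range k, binomialWeight N p j * (1 - (j : ℝ) / (N * p)) +
      ∑ j ∈ Icc k N, binomialWeight N p j * (1 - (j : ℝ) / (N * p)) = 0 := by
    have htot : ∑ j ∈ range (N + 1), binomialWeight N p j * (1 - (j : ℝ) / (N * p)) = 0 := by
      simp_rw [mul_sub, mul_one, ← mul_div_assoc]
      rw [sum_sub_distrib, ← sum_div, sum_binomialWeight, sum_binomialWeight_mul_id,
        div_self hm.ne', sub_self]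
    rw [← htot, ← Ico_add_one_right_eq_Icc]
    exact sum_range_add_sum_Ico _ (by omega)
  have hlow : 0 ≤ ∑ j ∈ range k, binomialWeight N p j * (1 - (j : ℝ) / (N * p)) := by
    refine sum_nonneg fun j hj => mul_nonneg (binomialWeight_nonneg hp0 hp1 N j) ?_
    have hjk : (j : ℝ) ≤ k := by exact_mod_cast (mem_range.mp hj).le
    rw [sub_nonneg, div_le_one hm]
    exact hjk.trans hk
  linarith

lemma sum_Icc_binomialWeight_mul_log_sub_log_le {N k : ℕ} {p : ℝ} (hN : 0 < N) (hp0 : 0 < p)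
    (hp1 : p ≤ 1) (hk1 : 1 ≤ k) (hkN : k ≤ N) (hk : (k : ℝ) ≤ N * p) :
    ∑ j ∈ Icc k N, binomialWeight N p j * (Real.log (N * p) - Real.log j) ≤
      3 / (2 * (N * p)) := by
  have hk1R : (1 : ℝ) ≤ k := by exact_mod_cast hk1
  have hm1 : 1 ≤ (N : ℝ) * p := hk1R.trans hk
  have hlin := sum_Icc_binomialWeight_mul_one_sub_div_mean_nonpos hp0.le hp1 hkN
    (one_pos.trans_le hm1) hk
  have hvar := sum_binomialWeight_mul_sq_sub_mean N p
  have hrec := sum_binomialWeight_mul_sq_sub_mean_div_le hN hp0 hp1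
  generalize hmdef : (N : ℝ) * p = m at *
  have hm : 0 < m := by linarith
  have hvar' : ∑ j ∈ range (N + 1), binomialWeight N p j * ((j : ℝ) - m) ^ 2 ≤ m := by
    rw [hvar]
    nlinarith
  calc ∑ j ∈ Icc k N, binomialWeight N p j * (Real.log m - Real.log j)
      ≤ ∑ j ∈ Icc k N, (binomialWeight N p j * (1 - (j : ℝ) / m) + binomialWeight N p j *
          (((j : ℝ) - m) ^ 2 / (6 * m ^ 2) + 2 * ((j : ℝ) - m) ^ 2 / (3 * m * (j + 1)))) := by
        refine sum_le_sum fun j hj => ?_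
        have hj1 : (1 : ℝ) ≤ j := by exact_mod_cast hk1.trans (mem_Icc.mp hj).1
        rw [← mul_add]
        exact mul_le_mul_of_nonneg_left (log_sub_log_le_of_one_le hm hj1)
          (binomialWeight_nonneg hp0.le hp1 N j)
    _ ≤ ∑ j ∈ Icc k N, binomialWeight N p j *
          (((j : ℝ) - m) ^ 2 / (6 * m ^ 2) + 2 * ((j : ℝ) - m) ^ 2 / (3 * m * (j + 1))) := by
        rw [sum_add_distrib]
        linarith
    _ ≤ ∑ j ∈ range (N + 1), binomialWeight N p j *
          (((j : ℝ) - m) ^ 2 / (6 * m ^ 2) + 2 * ((j : ℝ) - m) ^ 2 / (3 * m * (j + 1))) := by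
        refine sum_le_sum_of_subset_of_nonneg (fun j hj => ?_) fun j _ _ => ?_
        · exact mem_range.mpr (Nat.lt_succ_of_le (mem_Icc.mp hj).2)
        · have := binomialWeight_nonneg hp0.le hp1 N j
          positivity
    _ = 1 / (6 * m ^ 2) * ∑ j ∈ range (N + 1), binomialWeight N p j * ((j : ℝ) - m) ^ 2 +
          2 / (3 * m) *
            ∑ j ∈ range (N + 1), binomialWeight N p j * (((j : ℝ) - m) ^ 2 / (j + 1)) := by
        rw [mul_sum, mul_sum, ← sum_add_distrib]
        refine sum_congr rfl fun j _ => ?_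
        have hj : (j : ℝ) + 1 ≠ 0 := by positivity
        field_simp
    _ ≤ 1 / (6 * m ^ 2) * m + 2 / (3 * m) * (1 + 1 / m) := by gcongr
    _ ≤ 1 / (6 * m ^ 2) * m + 2 / (3 * m) * (1 + 1) := by
        gcongr
        exact (div_le_one hm).mpr hm1
    _ = 3 / (2 * m) := by
        field_simp
        ring

theorem binomial_truncated_log_lower_bound (N : ℕ) (p : ℝ) (k : ℕ)
    (hN : 2 ≤ N) (hp0 : 0 < p) (hp1 : p ≤ 1) (hk1 : 1 ≤ k) (hk : (k : ℝ) < N * p) :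
    Real.log ((N : ℝ) * p) -
        (∑ j ∈ Finset.Icc k N,
            (N.choose j : ℝ) * p ^ j * (1 - p) ^ (N - j) * Real.log (j : ℝ)) /
          (∑ j ∈ Finset.Icc k N, (N.choose j : ℝ) * p ^ j * (1 - p) ^ (N - j))
      ≤ (3 / (2 * ((N : ℝ) * p))) / (1 - Real.exp (-2 * ((N : ℝ) * p - k) ^ 2 / N)) := by
  have hN0 : 0 < N := by omega
  have hNR : (0 : ℝ) < N := by exact_mod_cast hN0
  have hkN : k ≤ N := by
    have : (k : ℝ) ≤ N := hk.le.trans (mul_le_of_le_one_right hNR.le hp1)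
    exact_mod_cast this
  have htail := one_sub_exp_le_sum_Icc_binomialWeight hN0 hp0.le hp1 hkN hk.le
  have hsum := sum_Icc_binomialWeight_mul_log_sub_log_le hN0 hp0 hp1 hk1 hkN hk.le
  have hden : 0 < 1 - Real.exp (-2 * ((N : ℝ) * p - k) ^ 2 / N) := by
    rw [sub_pos, Real.exp_lt_one_iff]
    have : 0 < (N : ℝ) * p - k := sub_pos.mpr hk
    have : 0 < ((N : ℝ) * p - k) ^ 2 / N := by positivity
    rw [mul_div_assoc]
    linarith
  have hP := hden.trans_le htail
  simp_rw [mul_sub] at hsum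
  rw [sum_sub_distrib, ← sum_mul] at hsum
  simp only [binomialWeight] at htail hsum hP
  calc _ = ((∑ j ∈ Icc k N, (N.choose j : ℝ) * p ^ j * (1 - p) ^ (N - j)) * Real.log (N * p) -
        ∑ j ∈ Icc k N, (N.choose j : ℝ) * p ^ j * (1 - p) ^ (N - j) * Real.log j) /
          ∑ j ∈ Icc k N, (N.choose j : ℝ) * p ^ j * (1 - p) ^ (N - j) := by
        rw [sub_div, mul_div_cancel_left₀ _ hP.ne']
    _ ≤ (3 / (2 * ((N : ℝ) * p))) /
          ∑ j ∈ Icc k N, (N.choose j : ℝ) * p ^ j * (1 - p) ^ (N - j) := by gcongr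
    _ ≤ _ := by gcongr
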